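/- Let the LQ coefficients and smooth common-noise coefficients N, Γ be given, assume Q_t + Q̄_t − Q̄_t S_t ⪰ 0 for every t and Q + Q̄ − Q̄S ⪰ 0, and suppose the unique C¹ solution e : [0,T] → ℝ^{d×d} of de_t/dt = (C_t + Γ_t)ᵀ e_t, e_0 = Id, satisfies e_t = λ_t·Id with λ_t > 0 for every t ∈ [0,T]. Then for every x₀ ∈ ℝ^d the smooth forward–backward system x̄_t = x₀ + ∫₀ᵗ ((N_s + Γ_s + A_s + C_s)x̄_s − B_s R_s⁻¹ B_sᵀ ȳ_s) ds, ȳ_t = (Q + Q̄ − Q̄S)x̄_T + ∫_t^T (N_sᵀ ȳ_s + (Q_s + Q̄_s − Q̄_s S_s)x̄_s + A_sᵀ ȳ_s) ds has exactly one pair of continuous solutions (x̄, ȳ) on [0,T]. -/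

import Mathlib

/-!
Pairing `x` with `y` along the system and using that `C + Γ` is scalar, say `c • 1`, gives
`(x ⬝ᵥ y)' = c (x ⬝ᵥ y) - (y ⬝ᵥ B R⁻¹ Bᵀ y + x ⬝ᵥ (Qt + Qbt - Qbt St) x)`, so `exp (-∫ c) (x ⬝ᵥ y)`
is nonincreasing. For the difference of two solutions it vanishes at `0`, and the terminal condition
makes it nonnegative at `T`; hence it is constant, `B R⁻¹ Bᵀ y = 0`, and both components solve
homogeneous linear equations with zero data. This is uniqueness, and existence follows from it by
the Fredholm alternative for the boundary conditions. The scalar form of `C + Γ` is read off from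
`e' = (C + Γ)ᵀ e`, because the derivative of a curve of scalar matrices is scalar.
-/

open MeasureTheory Matrix Set

noncomputable section

abbrev Mat (d : ℕ) := Matrix (Fin d) (Fin d) ℝ
abbrev Vec (d : ℕ) := Fin d → ℝ

attribute [local instance] Matrix.normedAddCommGroup Matrix.normedSpace

section IntegralCurve

variable {E : Type*} [NormedAddCommGroup E] [NormedSpace ℝ E] {ρ : ℝ} {v : ℝ → E → E}
  {γ γ₁ γ₂ : ℝ → E} {a b : ℝ} {K : NNReal}

/-- The radial retraction of `E` onto the closed ball of radius `ρ` around `0`, used to truncate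
vector fields. It is meaningful only for `0 < ρ`. -/
def radialRetraction (ρ : ℝ) (x : E) : E :=
  (ρ / max ρ ‖x‖) • x

lemma radialRetraction_of_norm_le {x : E} (hρ : 0 < ρ) (hx : ‖x‖ ≤ ρ) :
    radialRetraction ρ x = x := by
  rw [radialRetraction, max_eq_left hx, div_self hρ.ne', one_smul]

lemma norm_radialRetraction (hρ : 0 < ρ) (x : E) : ‖radialRetraction ρ x‖ = min ρ ‖x‖ := by
  have hmax : 0 < max ρ ‖x‖ := hρ.trans_le (le_max_left _ _)
  rw [radialRetraction, norm_smul, Real.norm_of_nonneg (by positivity), div_mul_eq_mul_div,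
    div_eq_iff hmax.ne', min_mul_max]

lemma lipschitzWith_radialRetraction (hρ : 0 < ρ) :
    LipschitzWith 2 (radialRetraction ρ : E → E) := by
  refine LipschitzWith.of_dist_le_mul fun x y ↦ ?_
  simp only [dist_eq_norm, radialRetraction, NNReal.coe_ofNat]
  set r := max ρ ‖x‖
  set s := max ρ ‖y‖
  have hr : 0 < r := hρ.trans_le (le_max_left _ _)
  have hs : 0 < s := hρ.trans_le (le_max_left _ _)
  have hρr : ρ / r ≤ 1 := (div_le_one hr).2 (le_max_left _ _)
  have hys : ‖y‖ / s ≤ 1 := (div_le_one hs).2 (le_max_right _ _)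
  have hsr : |s - r| ≤ ‖x - y‖ := by
    rw [abs_sub_comm]
    exact (abs_max_sub_max_le_max ρ ‖x‖ ρ ‖y‖).trans <| by
      simpa using abs_norm_sub_norm_le x y
  calc ‖(ρ / r) • x - (ρ / s) • y‖
      = ‖(ρ / r) • (x - y) + (ρ / r * ((s - r) / s)) • y‖ := by
        congr 1
        have : ρ / r * ((s - r) / s) = ρ / r - ρ / s := by field_simp
        rw [this]
        module
    _ ≤ ρ / r * ‖x - y‖ + ρ / r * (|s - r| * (‖y‖ / s)) := by
        refine (norm_add_le _ _).trans_eq ?_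
        simp only [norm_smul, norm_mul, norm_div, Real.norm_eq_abs, abs_of_pos hρ, abs_of_pos hr,
          abs_of_pos hs]
        ring
    _ ≤ 1 * ‖x - y‖ + 1 * (‖x - y‖ * 1) := by gcongr
    _ = 2 * ‖x - y‖ := by ring

theorem norm_le_gronwallBound_of_isIntegralCurveOn {M : ℝ}
    (hv : ∀ t ∈ Icc a b, ∀ x, ‖v t x‖ ≤ K * ‖x‖ + M) (hγ : IsIntegralCurveOn γ v (Icc a b)) :
    ∀ t ∈ Icc a b, ‖γ t‖ ≤ gronwallBound ‖γ a‖ K M (t - a) :=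
  norm_le_gronwallBound_of_norm_deriv_right_le hγ.continuousOn
    (fun t ht ↦ (hγ t (Ico_subset_Icc_self ht)).mono_of_mem_nhdsWithin (Icc_mem_nhdsGE_of_mem ht))
    le_rfl fun t ht ↦ hv t (Ico_subset_Icc_self ht) _

theorem eqOn_Icc_of_isIntegralCurveOn {t₀ : ℝ} (ht₀ : t₀ ∈ Icc a b)
    (hv : ∀ t ∈ Icc a b, LipschitzWith K (v t)) (hγ₁ : IsIntegralCurveOn γ₁ v (Icc a b))
    (hγ₂ : IsIntegralCurveOn γ₂ v (Icc a b)) (h : γ₁ t₀ = γ₂ t₀) : EqOn γ₁ γ₂ (Icc a b) := by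
  rw [← Icc_union_Icc_eq_Icc ht₀.1 ht₀.2]
  have hleft : Icc a t₀ ⊆ Icc a b := Icc_subset_Icc_right ht₀.2
  have hright : Icc t₀ b ⊆ Icc a b := Icc_subset_Icc_left ht₀.1
  refine EqOn.union ?_ ?_
  · have hderiv : ∀ {γ}, IsIntegralCurveOn γ v (Icc a b) →
        ∀ t ∈ Ioc a t₀, HasDerivWithinAt γ (v t (γ t)) (Iic t) t := fun hγ t ht ↦
      (hγ.mono hleft t (Ioc_subset_Icc_self ht)).mono_of_mem_nhdsWithin (Icc_mem_nhdsLE_of_mem ht)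
    exact ODE_solution_unique_of_mem_Icc_left (s := fun _ ↦ univ)
      (fun t ht ↦ (hv t (hleft (Ioc_subset_Icc_self ht))).lipschitzOnWith)
      (hγ₁.continuousOn.mono hleft) (hderiv hγ₁) (fun _ _ ↦ mem_univ _)
      (hγ₂.continuousOn.mono hleft) (hderiv hγ₂) (fun _ _ ↦ mem_univ _) h
  · have hderiv : ∀ {γ}, IsIntegralCurveOn γ v (Icc a b) →
        ∀ t ∈ Ico t₀ b, HasDerivWithinAt γ (v t (γ t)) (Ici t) t := fun hγ t ht ↦
      (hγ.mono hright t (Ico_subset_Icc_self ht)).mono_of_mem_nhdsWithin (Icc_mem_nhdsGE_of_mem ht)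
    exact ODE_solution_unique_of_mem_Icc_right (s := fun _ ↦ univ)
      (fun t ht ↦ (hv t (hright (Ico_subset_Icc_self ht))).lipschitzOnWith)
      (hγ₁.continuousOn.mono hright) (hderiv hγ₁) (fun _ _ ↦ mem_univ _)
      (hγ₂.continuousOn.mono hright) (hderiv hγ₂) (fun _ _ ↦ mem_univ _) h

variable [CompleteSpace E]

theorem exists_isIntegralCurveOn_Icc_of_norm_le {M : ℝ} (hab : a ≤ b)
    (hv : ∀ t ∈ Icc a b, LipschitzWith K (v t)) (hcont : ∀ x, ContinuousOn (v · x) (Icc a b))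
    (hM : ∀ t ∈ Icc a b, ∀ x, ‖v t x‖ ≤ M) (x₀ : E) :
    ∃ γ : ℝ → E, γ a = x₀ ∧ IsIntegralCurveOn γ v (Icc a b) := by
  have hpl : IsPicardLindelof v (⟨a, left_mem_Icc.2 hab⟩ : Icc a b) x₀
      (M.toNNReal * (b - a).toNNReal) 0 M.toNNReal K :=
    { lipschitzOnWith := fun t ht ↦ (hv t ht).lipschitzOnWith
      continuousOn := fun x _ ↦ hcont x
      norm_le := fun t ht x _ ↦ (hM t ht x).trans (Real.le_coe_toNNReal M)
      mul_max_le := by simp [hab] }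
  exact hpl.exists_eq_forall_mem_Icc_hasDerivWithinAt₀

/-- The integral curves of the field truncated outside a large ball never leave that ball, by
Grönwall's inequality. -/
theorem exists_isIntegralCurveOn_Icc_of_lipschitzWith (hab : a ≤ b)
    (hv : ∀ t ∈ Icc a b, LipschitzWith K (v t)) (hcont : ∀ x, ContinuousOn (v · x) (Icc a b))
    (x₀ : E) : ∃ γ : ℝ → E, γ a = x₀ ∧ IsIntegralCurveOn γ v (Icc a b) := by
  obtain ⟨M, hM⟩ := isCompact_Icc.exists_bound_of_continuousOn (hcont 0)
  have hM₀ : 0 ≤ M := (norm_nonneg _).trans (hM a (left_mem_Icc.2 hab))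
  have hgrowth : ∀ t ∈ Icc a b, ∀ x, ‖v t x‖ ≤ K * ‖x‖ + M := fun t ht x ↦ by
    have hdiff := (hv t ht).norm_sub_le x 0
    rw [sub_zero] at hdiff
    linarith [norm_le_norm_add_norm_sub' (v t x) (v t 0), hM t ht]
  let g := gronwallBound ‖x₀‖ K M
  have hg : Monotone g := gronwallBound_mono (norm_nonneg _) hM₀ K.2
  have hg₀ : 0 ≤ g (b - a) := (norm_nonneg x₀).trans <| by
    simpa only [g, gronwallBound_x0] using hg (sub_nonneg.2 hab)
  let ρ := g (b - a) + 1
  have hρ : 0 < ρ := by positivity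
  obtain ⟨γ, hγa, hγ⟩ := exists_isIntegralCurveOn_Icc_of_norm_le
    (v := fun t x ↦ v t (radialRetraction ρ x)) (M := K * ρ + M) hab
    (fun t ht ↦ (hv t ht).comp (lipschitzWith_radialRetraction hρ)) (fun x ↦ hcont _)
    (fun t ht x ↦ (hgrowth t ht _).trans <| by
      rw [norm_radialRetraction hρ]; gcongr; exact min_le_left _ _) x₀
  refine ⟨γ, hγa, fun t ht ↦ ?_⟩
  have hbound : ‖γ t‖ ≤ g (t - a) := by
    simpa only [g, ← hγa] using norm_le_gronwallBound_of_isIntegralCurveOn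
      (fun t ht x ↦ (hgrowth t ht _).trans <| by
        rw [norm_radialRetraction hρ]; gcongr; exact min_le_right _ _) hγ t ht
  have hmem : ‖γ t‖ ≤ ρ :=
    (hbound.trans (hg (sub_le_sub_right ht.2 a))).trans (le_add_of_nonneg_right zero_le_one)
  simpa only [radialRetraction_of_norm_le hρ hmem] using hγ t ht

theorem forall_mem_Icc_eq_add_integral_iff {u g : ℝ → E} (hg : ContinuousOn g (Icc a b)) {t₀ : ℝ}
    (ht₀ : t₀ ∈ Icc a b) (u₀ : E) :
    (∀ t ∈ Icc a b, u t = u₀ + ∫ s in t₀..t, g s) ↔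
      u t₀ = u₀ ∧ ∀ t ∈ Icc a b, HasDerivWithinAt u (g t) (Icc a b) t := by
  have hg' : ContinuousOn (Function.uncurry fun t (_ : E) ↦ g t) (Icc a b ×ˢ univ) :=
    hg.comp continuousOn_fst fun p hp ↦ hp.1
  constructor
  · intro h
    refine ⟨by simpa using h t₀ ht₀, fun t ht ↦ ?_⟩
    exact (ODE.hasDerivWithinAt_picard_Icc (α := fun _ ↦ 0) ht₀ hg' continuousOn_const
      (fun _ _ ↦ mem_univ _) u₀ ht).congr_of_mem h ht
  · rintro ⟨rfl, h⟩ t ht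
    have hsub : uIcc t₀ t ⊆ Icc a b := uIcc_subset_Icc ht₀ ht
    exact (ODE.picard_eq_of_hasDerivAt (hg'.mono (prod_mono hsub subset_rfl))
      (fun s hs ↦ (h s (hsub hs)).mono hsub) (mapsTo_univ _ _)).symm

end IntegralCurve

section LinearBoundaryValueProblem

variable {E : Type*} [NormedAddCommGroup E] [NormedSpace ℝ E] {L : ℝ → E →L[ℝ] E} {a b : ℝ}

lemma exists_forall_mem_Icc_lipschitzWith (hL : ContinuousOn L (Icc a b)) :
    ∃ K : NNReal, ∀ t ∈ Icc a b, LipschitzWith K (L t) := by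
  obtain ⟨M, hM⟩ := isCompact_Icc.exists_bound_of_continuousOn hL
  exact ⟨M.toNNReal, fun t ht ↦ (L t).lipschitz.weaken (NNReal.le_toNNReal_of_coe_le (hM t ht))⟩

theorem isIntegralCurveOn_linear_eq_zero {z : ℝ → E} {t₀ : ℝ} (hL : ContinuousOn L (Icc a b))
    (hz : IsIntegralCurveOn z (fun t ↦ L t) (Icc a b)) (ht₀ : t₀ ∈ Icc a b) (hzt₀ : z t₀ = 0) :
    ∀ t ∈ Icc a b, z t = 0 := by
  obtain ⟨K, hK⟩ := exists_forall_mem_Icc_lipschitzWith hL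
  have hzero : IsIntegralCurve (fun _ ↦ (0 : E)) (fun t ↦ L t) :=
    isIntegralCurve_const fun t ↦ map_zero (L t)
  exact eqOn_Icc_of_isIntegralCurveOn ht₀ hK hz (hzero.isIntegralCurveOn _) hzt₀

theorem exists_isIntegralCurveOn_linear [CompleteSpace E] (hab : a ≤ b)
    (hL : ContinuousOn L (Icc a b)) (z₀ : E) :
    ∃ z : ℝ → E, z a = z₀ ∧ IsIntegralCurveOn z (fun t ↦ L t) (Icc a b) :=
  let ⟨_, hK⟩ := exists_forall_mem_Icc_lipschitzWith hL
  exists_isIntegralCurveOn_Icc_of_lipschitzWith hab hK (fun _ ↦ hL.clm_apply continuousOn_const) z₀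

theorem exists_linearMap_forall_isIntegralCurveOn [CompleteSpace E] (hab : a ≤ b)
    (hL : ContinuousOn L (Icc a b)) :
    ∃ Φ : E →ₗ[ℝ] E, ∀ z : ℝ → E, IsIntegralCurveOn z (fun t ↦ L t) (Icc a b) → z b = Φ (z a) := by
  obtain ⟨K, hK⟩ := exists_forall_mem_Icc_lipschitzWith hL
  choose Z hZa hZ using exists_isIntegralCurveOn_linear hab hL
  have huniq : ∀ z : ℝ → E, IsIntegralCurveOn z (fun t ↦ L t) (Icc a b) → z b = Z (z a) b :=
    fun z hz ↦ eqOn_Icc_of_isIntegralCurveOn (left_mem_Icc.2 hab) hK hz (hZ _) (hZa _).symm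
      (right_mem_Icc.2 hab)
  refine ⟨⟨⟨fun z₀ ↦ Z z₀ b, fun u w ↦ ?_⟩, fun r u ↦ ?_⟩, huniq⟩
  · simpa [hZa] using (huniq (Z u + Z w) fun t ht ↦ by
      simpa using (hZ u t ht).add (hZ w t ht)).symm
  · simpa [hZa] using (huniq (r • Z u) fun t ht ↦ by
      simpa using (hZ u t ht).const_smul r).symm

/-- The Fredholm alternative for a two-point boundary value problem: the boundary condition is a
square linear system in the initial value, so uniqueness implies solvability. -/
theorem exists_isIntegralCurveOn_linear_boundary_eq [FiniteDimensional ℝ E] {F : Type*}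
    [AddCommGroup F] [Module ℝ F] [FiniteDimensional ℝ F]
    (hfinrank : Module.finrank ℝ E = Module.finrank ℝ F) (hab : a ≤ b)
    (hL : ContinuousOn L (Icc a b)) {α β : E →ₗ[ℝ] F}
    (hzero : ∀ z : ℝ → E, IsIntegralCurveOn z (fun t ↦ L t) (Icc a b) →
      α (z a) + β (z b) = 0 → z a = 0) (w : F) :
    ∃ z : ℝ → E, IsIntegralCurveOn z (fun t ↦ L t) (Icc a b) ∧ α (z a) + β (z b) = w := by
  have := FiniteDimensional.complete ℝ E
  obtain ⟨Φ, hΦ⟩ := exists_linearMap_forall_isIntegralCurveOn hab hL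
  have hinj : Function.Injective (α + β ∘ₗ Φ) := (injective_iff_map_eq_zero _).2 fun z₀ h ↦ by
    obtain ⟨z, rfl, hz⟩ := exists_isIntegralCurveOn_linear hab hL z₀
    exact hzero z hz (by rwa [hΦ z hz])
  obtain ⟨z₀, h⟩ :=
    (LinearMap.injective_iff_surjective_of_finrank_eq_finrank hfinrank).1 hinj w
  obtain ⟨z, rfl, hz⟩ := exists_isIntegralCurveOn_linear hab hL z₀
  exact ⟨z, hz, by rwa [hΦ z hz]⟩

end LinearBoundaryValueProblem

section Duality

variable {a b : ℝ}

theorem eq_zero_of_hasDerivWithinAt_mul_sub {c ψ q : ℝ → ℝ} (hab : a < b)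
    (hc : ContinuousOn c (Icc a b)) (hq : ∀ t ∈ Icc a b, 0 ≤ q t)
    (hψ : ∀ t ∈ Icc a b, HasDerivWithinAt ψ (c t * ψ t - q t) (Icc a b) t)
    (hψa : ψ a ≤ 0) (hψb : 0 ≤ ψ b) : ∀ t ∈ Icc a b, q t = 0 := by
  have ha : a ∈ Icc a b := left_mem_Icc.2 hab.le
  have hb : b ∈ Icc a b := right_mem_Icc.2 hab.le
  let w : ℝ → ℝ := fun t ↦ Real.exp (-∫ s in a..t, c s)
  have hw : ∀ t, 0 < w t := fun t ↦ Real.exp_pos _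
  have hφ : ∀ t ∈ Icc a b, HasDerivWithinAt (w * ψ) (-(w t * q t)) (Icc a b) t := fun t ht ↦ by
    have hW := ((forall_mem_Icc_eq_add_integral_iff hc ha 0).1 fun t _ ↦ (zero_add _).symm).2 t ht
    exact (hW.fun_neg.exp.mul (hψ t ht)).congr_deriv (by ring)
  have hanti : AntitoneOn (w * ψ) (Icc a b) :=
    antitoneOn_of_hasDerivWithinAt_nonpos (convex_Icc a b)
      (fun t ht ↦ (hφ t ht).continuousWithinAt)
      (fun t ht ↦ (hφ t (interior_subset ht)).mono interior_subset)
      (fun t ht ↦ neg_nonpos.2 (mul_nonneg (hw t).le (hq t (interior_subset ht))))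
  have hφ₀ : ∀ t ∈ Icc a b, (w * ψ) t = 0 := fun t ht ↦ le_antisymm
    ((hanti ha ht ht.1).trans (mul_nonpos_of_nonneg_of_nonpos (hw a).le hψa))
    ((mul_nonneg (hw b).le hψb).trans (hanti ht hb ht.2))
  intro t ht
  have hderiv : -(w t * q t) = 0 := (uniqueDiffOn_Icc hab t ht).eq_deriv _ (hφ t ht)
    ((hasDerivWithinAt_const t _ (0 : ℝ)).congr_of_mem hφ₀ ht)
  exact (mul_eq_zero.1 (neg_eq_zero.1 hderiv)).resolve_left (hw t).ne'

end Duality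

section ForwardBackward

variable {n : Type*} [Fintype n] {P F K H : ℝ → Matrix n n ℝ} {G : Matrix n n ℝ} {a b : ℝ}
  {x₀ x₀' : n → ℝ} {x x' y y' : ℝ → n → ℝ}

lemma hasDerivWithinAt_dotProduct {u v : ℝ → n → ℝ} {u' v' : n → ℝ} {s : Set ℝ} {t : ℝ}
    (hu : HasDerivWithinAt u u' s t) (hv : HasDerivWithinAt v v' s t) :
    HasDerivWithinAt (fun t ↦ u t ⬝ᵥ v t) (u' ⬝ᵥ v t + u t ⬝ᵥ v') s t := by
  simp only [dotProduct, ← Finset.sum_add_distrib]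
  exact HasDerivWithinAt.fun_sum fun i _ ↦
    (hasDerivWithinAt_pi.1 hu i).mul (hasDerivWithinAt_pi.1 hv i)

/-- The linear forward–backward system `x' = P x - K y`, `y' = -(Fᵀ y + H x)` on `[a, b]` with
initial condition `x a = x₀` and terminal condition `y b = G (x b)`. The derivatives are one-sided
at the endpoints. -/
structure IsForwardBackwardSolution (P F K H : ℝ → Matrix n n ℝ) (G : Matrix n n ℝ) (a b : ℝ)
    (x₀ : n → ℝ) (x y : ℝ → n → ℝ) : Prop where
  forward : ∀ t ∈ Icc a b, HasDerivWithinAt x (P t *ᵥ x t - K t *ᵥ y t) (Icc a b) t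
  backward : ∀ t ∈ Icc a b, HasDerivWithinAt y (-((F t)ᵀ *ᵥ y t + H t *ᵥ x t)) (Icc a b) t
  initial : x a = x₀
  terminal : y b = G *ᵥ x b

namespace IsForwardBackwardSolution

lemma continuousOn_forward (h : IsForwardBackwardSolution P F K H G a b x₀ x y) :
    ContinuousOn x (Icc a b) := fun t ht ↦ (h.forward t ht).continuousWithinAt

lemma continuousOn_backward (h : IsForwardBackwardSolution P F K H G a b x₀ x y) :
    ContinuousOn y (Icc a b) := fun t ht ↦ (h.backward t ht).continuousWithinAt

lemma sub (h : IsForwardBackwardSolution P F K H G a b x₀ x y)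
    (h' : IsForwardBackwardSolution P F K H G a b x₀' x' y') :
    IsForwardBackwardSolution P F K H G a b (x₀ - x₀') (x - x') (y - y') where
  forward t ht := ((h.forward t ht).sub (h'.forward t ht)).congr_deriv <| by
    simp only [Pi.sub_apply, mulVec_sub]
    abel
  backward t ht := ((h.backward t ht).sub (h'.backward t ht)).congr_deriv <| by
    simp only [Pi.sub_apply, mulVec_sub]
    abel
  initial := congr_arg₂ (· - ·) h.initial h'.initial
  terminal := by simp only [Pi.sub_apply, h.terminal, h'.terminal, mulVec_sub]

lemma hasDerivWithinAt_pairing (h : IsForwardBackwardSolution P F K H G a b x₀ x y) :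
    ∀ t ∈ Icc a b, HasDerivWithinAt (fun t ↦ y t ⬝ᵥ x t)
      (y t ⬝ᵥ (P t - F t) *ᵥ x t - (y t ⬝ᵥ K t *ᵥ y t + x t ⬝ᵥ H t *ᵥ x t)) (Icc a b) t :=
  fun t ht ↦ (hasDerivWithinAt_dotProduct (h.backward t ht) (h.forward t ht)).congr_deriv <| by
    rw [dotProduct_comm _ (x t)]
    simp only [dotProduct_sub, dotProduct_neg, dotProduct_add, dotProduct_transpose_mulVec,
      sub_mulVec]
    ring

variable [DecidableEq n] {c : ℝ → ℝ}

lemma mulVec_backward_eq_zero (hab : a < b) (hc : ContinuousOn c (Icc a b))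
    (hPF : ∀ t ∈ Icc a b, P t - F t = c t • 1) (hK : ∀ t ∈ Icc a b, (K t).PosSemidef)
    (hH : ∀ t ∈ Icc a b, (H t).PosSemidef) (hG : G.PosSemidef)
    (h : IsForwardBackwardSolution P F K H G a b 0 x y) : ∀ t ∈ Icc a b, K t *ᵥ y t = 0 := by
  have hquad {M : Matrix n n ℝ} (hM : M.PosSemidef) (v : n → ℝ) : 0 ≤ v ⬝ᵥ M *ᵥ v :=
    hM.dotProduct_mulVec_nonneg v
  have hzero := eq_zero_of_hasDerivWithinAt_mul_sub (c := c) (ψ := fun t ↦ y t ⬝ᵥ x t)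
    (q := fun t ↦ y t ⬝ᵥ K t *ᵥ y t + x t ⬝ᵥ H t *ᵥ x t) hab hc
    (fun t ht ↦ add_nonneg (hquad (hK t ht) _) (hquad (hH t ht) _))
    (fun t ht ↦ (h.hasDerivWithinAt_pairing t ht).congr_deriv <| by
      rw [hPF t ht, smul_mulVec, one_mulVec, dotProduct_smul, smul_eq_mul])
    (by simp [h.initial]) (by simpa only [h.terminal, dotProduct_comm _ (x b)] using hquad hG _)
  intro t ht
  refine ((hK t ht).dotProduct_mulVec_zero_iff _).1 (le_antisymm ?_ (hquad (hK t ht) _))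
  exact (le_add_of_nonneg_right (hquad (hH t ht) _)).trans_eq (hzero t ht)

theorem eq_zero (hab : a < b) (hP : ContinuousOn P (Icc a b)) (hF : ContinuousOn F (Icc a b))
    (hc : ContinuousOn c (Icc a b)) (hPF : ∀ t ∈ Icc a b, P t - F t = c t • 1)
    (hK : ∀ t ∈ Icc a b, (K t).PosSemidef) (hH : ∀ t ∈ Icc a b, (H t).PosSemidef)
    (hG : G.PosSemidef) (h : IsForwardBackwardSolution P F K H G a b 0 x y) :
    ∀ t ∈ Icc a b, x t = 0 ∧ y t = 0 := by
  have hcont {M : ℝ → Matrix n n ℝ} (hM : ContinuousOn M (Icc a b)) :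
      ContinuousOn (fun t ↦ (M t).mulVecLin.toContinuousLinearMap) (Icc a b) :=
    continuousOn_clm_apply.2 fun v ↦ by
      simp only [LinearMap.coe_toContinuousLinearMap', mulVecLin_apply]
      fun_prop
  have hKy := mulVec_backward_eq_zero hab hc hPF hK hH hG h
  have hx : ∀ t ∈ Icc a b, x t = 0 :=
    isIntegralCurveOn_linear_eq_zero (hcont hP)
      (fun t ht ↦ by simpa [hKy t ht] using h.forward t ht) (left_mem_Icc.2 hab.le) h.initial
  have hy : ∀ t ∈ Icc a b, y t = 0 :=
    isIntegralCurveOn_linear_eq_zero (hcont (M := fun t ↦ -(F t)ᵀ) (by fun_prop))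
      (fun t ht ↦ (h.backward t ht).congr_deriv <| by
        rw [hx t ht, mulVec_zero, add_zero, ← neg_mulVec]
        rfl)
      (right_mem_Icc.2 hab.le)
      (by rw [h.terminal, hx b (right_mem_Icc.2 hab.le), mulVec_zero])
  exact fun t ht ↦ ⟨hx t ht, hy t ht⟩

end IsForwardBackwardSolution

/-- The vector field `(x, y) ↦ (P x - K y, -(Fᵀ y + H x))` of the forward–backward system. -/
def forwardBackwardField (P F K H : Matrix n n ℝ) : (n → ℝ) × (n → ℝ) →L[ℝ] (n → ℝ) × (n → ℝ) :=
  LinearMap.toContinuousLinearMap <|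
    (P.mulVecLin ∘ₗ LinearMap.fst ℝ _ _ - K.mulVecLin ∘ₗ LinearMap.snd ℝ _ _).prod
      (-(Fᵀ.mulVecLin ∘ₗ LinearMap.snd ℝ _ _ + H.mulVecLin ∘ₗ LinearMap.fst ℝ _ _))

lemma forwardBackwardField_apply (P F K H : Matrix n n ℝ) (z : (n → ℝ) × (n → ℝ)) :
    forwardBackwardField P F K H z = (P *ᵥ z.1 - K *ᵥ z.2, -(Fᵀ *ᵥ z.2 + H *ᵥ z.1)) :=
  rfl

lemma continuousOn_forwardBackwardField {s : Set ℝ} (hP : ContinuousOn P s)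
    (hF : ContinuousOn F s) (hK : ContinuousOn K s) (hH : ContinuousOn H s) :
    ContinuousOn (fun t ↦ forwardBackwardField (P t) (F t) (K t) (H t)) s :=
  continuousOn_clm_apply.2 fun z ↦ by
    simp only [forwardBackwardField_apply]
    fun_prop

lemma isForwardBackwardSolution_of_isIntegralCurveOn {z : ℝ → (n → ℝ) × (n → ℝ)}
    (hz : IsIntegralCurveOn z (fun t ↦ forwardBackwardField (P t) (F t) (K t) (H t)) (Icc a b))
    (hzb : (z b).2 = G *ᵥ (z b).1) :
    IsForwardBackwardSolution P F K H G a b (z a).1 (fun t ↦ (z t).1) (fun t ↦ (z t).2) where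
  forward t ht := (hasFDerivAt_fst (𝕜 := ℝ) (p := z t)).comp_hasDerivWithinAt t (hz t ht)
  backward t ht := (hasFDerivAt_snd (𝕜 := ℝ) (p := z t)).comp_hasDerivWithinAt t (hz t ht)
  initial := rfl
  terminal := hzb

theorem exists_isForwardBackwardSolution (hab : a ≤ b) (hP : ContinuousOn P (Icc a b))
    (hF : ContinuousOn F (Icc a b)) (hK : ContinuousOn K (Icc a b)) (hH : ContinuousOn H (Icc a b))
    (hzero : ∀ x y, IsForwardBackwardSolution P F K H G a b 0 x y → y a = 0) (x₀ : n → ℝ) :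
    ∃ x y, IsForwardBackwardSolution P F K H G a b x₀ x y := by
  let α : (n → ℝ) × (n → ℝ) →ₗ[ℝ] (n → ℝ) × (n → ℝ) := (LinearMap.fst ℝ _ _).prod 0
  let β : (n → ℝ) × (n → ℝ) →ₗ[ℝ] (n → ℝ) × (n → ℝ) :=
    LinearMap.prod 0 (LinearMap.snd ℝ _ _ - G.mulVecLin ∘ₗ LinearMap.fst ℝ _ _)
  have hαβ {z₁ z₂ : (n → ℝ) × (n → ℝ)} {w : n → ℝ} :
      α z₁ + β z₂ = (w, 0) ↔ z₁.1 = w ∧ z₂.2 = G *ᵥ z₂.1 := by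
    simp [α, β, Prod.ext_iff, sub_eq_zero]
  obtain ⟨z, hz, hzw⟩ := exists_isIntegralCurveOn_linear_boundary_eq (α := α) (β := β) rfl hab
    (continuousOn_forwardBackwardField hP hF hK hH) (fun z hz hzw ↦ by
      obtain ⟨hza, hzb⟩ := hαβ.1 hzw
      exact Prod.ext hza (hzero _ _ (hza ▸ isForwardBackwardSolution_of_isIntegralCurveOn hz hzb)))
    (x₀, 0)
  obtain ⟨rfl, hzb⟩ := hαβ.1 hzw
  exact ⟨_, _, isForwardBackwardSolution_of_isIntegralCurveOn hz hzb⟩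

theorem exists_isForwardBackwardSolution_forall_eq [DecidableEq n] {c : ℝ → ℝ} (hab : a < b)
    (hP : ContinuousOn P (Icc a b)) (hF : ContinuousOn F (Icc a b))
    (hK : ContinuousOn K (Icc a b)) (hH : ContinuousOn H (Icc a b))
    (hc : ContinuousOn c (Icc a b)) (hPF : ∀ t ∈ Icc a b, P t - F t = c t • 1)
    (hKpos : ∀ t ∈ Icc a b, (K t).PosSemidef) (hHpos : ∀ t ∈ Icc a b, (H t).PosSemidef)
    (hG : G.PosSemidef) (x₀ : n → ℝ) :
    ∃ x y, IsForwardBackwardSolution P F K H G a b x₀ x y ∧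
      ∀ x₂ y₂, IsForwardBackwardSolution P F K H G a b x₀ x₂ y₂ →
        ∀ t ∈ Icc a b, x₂ t = x t ∧ y₂ t = y t := by
  have hzero {x y} (h : IsForwardBackwardSolution P F K H G a b 0 x y) :
      ∀ t ∈ Icc a b, x t = 0 ∧ y t = 0 := h.eq_zero hab hP hF hc hPF hKpos hHpos hG
  obtain ⟨x, y, h⟩ := exists_isForwardBackwardSolution hab.le hP hF hK hH
    (fun _ _ h ↦ (hzero h a (left_mem_Icc.2 hab.le)).2) x₀
  refine ⟨x, y, h, fun x₂ y₂ h₂ t ht ↦ ?_⟩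
  have hdiff := hzero (sub_self x₀ ▸ h₂.sub h) t ht
  simpa only [Pi.sub_apply, sub_eq_zero] using hdiff

theorem isForwardBackwardSolution_iff_integral (hab : a ≤ b) (hP : ContinuousOn P (Icc a b))
    (hF : ContinuousOn F (Icc a b)) (hK : ContinuousOn K (Icc a b))
    (hH : ContinuousOn H (Icc a b)) :
    IsForwardBackwardSolution P F K H G a b x₀ x y ↔
      ContinuousOn x (Icc a b) ∧ ContinuousOn y (Icc a b) ∧
        (∀ t ∈ Icc a b, x t = x₀ + ∫ s in a..t, (P s *ᵥ x s - K s *ᵥ y s)) ∧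
        ∀ t ∈ Icc a b, y t = G *ᵥ x b + ∫ s in t..b, ((F s)ᵀ *ᵥ y s + H s *ᵥ x s) := by
  have hiff (hx : ContinuousOn x (Icc a b)) (hy : ContinuousOn y (Icc a b)) :=
    and_congr
      (forall_mem_Icc_eq_add_integral_iff (u := x) (g := fun s ↦ P s *ᵥ x s - K s *ᵥ y s)
        (by fun_prop) (left_mem_Icc.2 hab) x₀)
      (forall_mem_Icc_eq_add_integral_iff (u := y) (g := fun s ↦ -((F s)ᵀ *ᵥ y s + H s *ᵥ x s))
        (by fun_prop) (right_mem_Icc.2 hab) (G *ᵥ x b))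
  simp only [intervalIntegral.integral_neg, ← intervalIntegral.integral_symm] at hiff
  constructor
  · intro h
    have hx := h.continuousOn_forward
    have hy := h.continuousOn_backward
    exact ⟨hx, hy, (hiff hx hy).2 ⟨⟨h.initial, h.forward⟩, h.terminal, h.backward⟩⟩
  · rintro ⟨hx, hy, h⟩
    obtain ⟨⟨hxa, hx'⟩, hyb, hy'⟩ := (hiff hx hy).1 h
    exact ⟨hx', hy', hxa, hyb⟩

end ForwardBackward

section ScalarFlow

lemma mem_of_hasDerivWithinAt_of_forall_mem {E : Type*} [NormedAddCommGroup E] [NormedSpace ℝ E]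
    {p : Submodule ℝ E} (hp : IsClosed (p : Set E)) {f : ℝ → E} {f' : E} {s : Set ℝ} {t : ℝ}
    (hs : UniqueDiffWithinAt ℝ s t) (hf : HasDerivWithinAt f f' s t) (hfs : ∀ τ ∈ s, f τ ∈ p) :
    f' ∈ p := by
  have hrange := range_derivWithin_subset_closure_span_image f (s := s) (t := s)
    (by simpa only [inter_self] using subset_closure)
  have hspan : Submodule.span ℝ (f '' s) ≤ p := Submodule.span_le.2 (image_subset_iff.2 hfs)
  rw [← hf.derivWithin hs]
  exact hp.closure_subset_iff.2 hspan (hrange (mem_range_self t))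

variable {n : Type*} [DecidableEq n]

theorem exists_eq_smul_one_of_hasDerivWithinAt [Fintype n] {D : Matrix n n ℝ}
    {e : ℝ → Matrix n n ℝ} {r : ℝ → ℝ} {s : Set ℝ} {t : ℝ} (hs : UniqueDiffWithinAt ℝ s t)
    (ht : t ∈ s) (he : HasDerivWithinAt e (Dᵀ * e t) s t) (hr : ∀ τ ∈ s, e τ = r τ • 1)
    (hrt : r t ≠ 0) : ∃ c : ℝ, D = c • 1 := by
  have hmem : Dᵀ * e t ∈ Submodule.span ℝ {(1 : Matrix n n ℝ)} :=
    mem_of_hasDerivWithinAt_of_forall_mem (Submodule.closed_of_finiteDimensional _) hs he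
      fun τ hτ ↦ Submodule.mem_span_singleton.2 ⟨r τ, (hr τ hτ).symm⟩
  obtain ⟨k, hk⟩ := Submodule.mem_span_singleton.1 hmem
  rw [hr t ht, mul_smul_one] at hk
  refine ⟨(r t)⁻¹ * k, transpose_injective ?_⟩
  rw [transpose_smul, transpose_one, mul_smul, hk, inv_smul_smul₀ hrt]

lemma exists_continuousOn_forall_eq_smul_one {X : Type*} [TopologicalSpace X]
    {D : X → Matrix n n ℝ} {s : Set X} (hD : ContinuousOn D s)
    (hscalar : ∀ t ∈ s, ∃ r : ℝ, D t = r • 1) :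
    ∃ c : X → ℝ, ContinuousOn c s ∧ ∀ t ∈ s, D t = c t • 1 := by
  rcases isEmpty_or_nonempty n with _ | ⟨⟨k⟩⟩
  · exact ⟨0, continuousOn_const, fun t _ ↦ Subsingleton.elim _ _⟩
  refine ⟨fun t ↦ D t k k, by fun_prop, fun t ht ↦ ?_⟩
  obtain ⟨r, hr⟩ := hscalar t ht
  simp [hr]

end ScalarFlow

section Control

variable {m : Type*} [DecidableEq m]

lemma posDef_of_sub_smul_one_posSemidef {M : Matrix m m ℝ} {r : ℝ} (hr : 0 < r)
    (hM : (M - r • (1 : Matrix m m ℝ)).PosSemidef) : M.PosDef := by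
  simpa only [sub_add_cancel] using PosDef.posSemidef_add hM (PosDef.one.smul hr)

lemma continuousOn_inv_of_det_ne_zero [Fintype m] {X : Type*} [TopologicalSpace X]
    {M : X → Matrix m m ℝ} {s : Set X} (hM : ContinuousOn M s) (hdet : ∀ t ∈ s, (M t).det ≠ 0) :
    ContinuousOn (fun t ↦ (M t)⁻¹) s := fun t ht ↦ by
  have hinv : ContinuousAt Ring.inverse (M t).det := by
    simpa only [Ring.inverse_eq_inv'] using continuousAt_inv₀ (hdet t ht)
  exact (continuousAt_matrix_inv (M t) hinv).comp_continuousWithinAt (hM t ht)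

lemma posSemidef_mul_inv_mul_transpose [Fintype m] {n : Type*} [Finite n] {R : Matrix m m ℝ}
    (hR : R.PosSemidef) (B : Matrix n m ℝ) : (B * R⁻¹ * Bᵀ).PosSemidef := by
  simpa only [conjTranspose_eq_transpose_of_trivial] using hR.inv.mul_mul_conjTranspose_same B

end Control

theorem smooth_fb_system_existence_uniqueness_general {n m : Type*} [Fintype n] [DecidableEq n]
    [Fintype m] [DecidableEq m] {a b : ℝ} (hab : a < b) {A C N Γ H : ℝ → Matrix n n ℝ}
    {B : ℝ → Matrix n m ℝ} {R : ℝ → Matrix m m ℝ} {G : Matrix n n ℝ}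
    (hA : ContinuousOn A (Icc a b)) (hC : ContinuousOn C (Icc a b))
    (hB : ContinuousOn B (Icc a b)) (hR : ContinuousOn R (Icc a b))
    (hN : ContinuousOn N (Icc a b)) (hΓ : ContinuousOn Γ (Icc a b))
    (hH : ContinuousOn H (Icc a b)) (hRpos : ∀ t ∈ Icc a b, (R t).PosDef)
    (hHpos : ∀ t ∈ Icc a b, (H t).PosSemidef) (hG : G.PosSemidef)
    (hscalar : ∀ t ∈ Icc a b, ∃ r : ℝ, C t + Γ t = r • 1) (x₀ : n → ℝ) :
    ∃ x y : ℝ → n → ℝ,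
      (ContinuousOn x (Icc a b) ∧ ContinuousOn y (Icc a b) ∧
        (∀ t ∈ Icc a b, x t = x₀ + ∫ s in a..t,
          ((N s + Γ s + A s + C s) *ᵥ x s - B s *ᵥ ((R s)⁻¹ *ᵥ ((B s)ᵀ *ᵥ y s)))) ∧
        (∀ t ∈ Icc a b, y t = G *ᵥ x b + ∫ s in t..b,
          ((N s)ᵀ *ᵥ y s + H s *ᵥ x s + (A s)ᵀ *ᵥ y s))) ∧
      ∀ x₂ y₂ : ℝ → n → ℝ,
        (ContinuousOn x₂ (Icc a b) ∧ ContinuousOn y₂ (Icc a b) ∧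
          (∀ t ∈ Icc a b, x₂ t = x₀ + ∫ s in a..t,
            ((N s + Γ s + A s + C s) *ᵥ x₂ s - B s *ᵥ ((R s)⁻¹ *ᵥ ((B s)ᵀ *ᵥ y₂ s)))) ∧
          (∀ t ∈ Icc a b, y₂ t = G *ᵥ x₂ b + ∫ s in t..b,
            ((N s)ᵀ *ᵥ y₂ s + H s *ᵥ x₂ s + (A s)ᵀ *ᵥ y₂ s))) →
        ∀ t ∈ Icc a b, x₂ t = x t ∧ y₂ t = y t := by
  obtain ⟨c, hc, hCΓ⟩ := exists_continuousOn_forall_eq_smul_one (hC.add hΓ) hscalar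
  have hRinv := continuousOn_inv_of_det_ne_zero hR fun t ht ↦ (hRpos t ht).det_pos.ne'
  have hP : ContinuousOn (fun t ↦ N t + Γ t + A t + C t) (Icc a b) := by fun_prop
  have hF : ContinuousOn (fun t ↦ N t + A t) (Icc a b) := by fun_prop
  have hK : ContinuousOn (fun t ↦ B t * (R t)⁻¹ * (B t)ᵀ) (Icc a b) := by fun_prop
  have hsol := exists_isForwardBackwardSolution_forall_eq hab hP hF hK hH hc
    (fun t ht ↦ by rw [← hCΓ t ht]; simp only [Pi.add_apply]; abel)
    (fun t ht ↦ posSemidef_mul_inv_mul_transpose (hRpos t ht).posSemidef (B t)) hHpos hG x₀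
  have hbackward (s : ℝ) (u v : n → ℝ) : (N s + A s)ᵀ *ᵥ u + v = (N s)ᵀ *ᵥ u + v + (A s)ᵀ *ᵥ u := by
    rw [transpose_add, add_mulVec, add_right_comm]
  simpa only [isForwardBackwardSolution_iff_integral hab.le hP hF hK hH, ← mulVec_mulVec,
    hbackward] using hsol

/-- under the scalar-flow condition `e_t = λ_t·Id` for the solution of
`de/dt = (C+Γ)ᵀe`, `e₀ = Id`, the smooth forward–backward system characterizing the
mean-field-game equilibrium mean flow has exactly one pair of continuous solutions on
`[0,T]`, for every initial condition `x₀`. -/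
theorem smooth_fb_system_existence_uniqueness
    (T : ℝ) (hT : 0 < T) (d κ : ℕ)
    (A C : ℝ → Mat d) (B : ℝ → Matrix (Fin d) (Fin κ) ℝ)
    (R : ℝ → Matrix (Fin κ) (Fin κ) ℝ) (Qt Qbt St : ℝ → Mat d)
    (Q Qb S : Mat d) (lam0 : ℝ) (hlam0 : 0 < lam0)
    (hA : ContinuousOn A (Icc (0:ℝ) T)) (hC : ContinuousOn C (Icc (0:ℝ) T))
    (hB : ContinuousOn B (Icc (0:ℝ) T)) (hR : ContinuousOn R (Icc (0:ℝ) T))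
    (hQt : ContinuousOn Qt (Icc (0:ℝ) T)) (hQbt : ContinuousOn Qbt (Icc (0:ℝ) T))
    (hSt : ContinuousOn St (Icc (0:ℝ) T))
    (hRpos : ∀ t ∈ Icc (0:ℝ) T, (R t - lam0 • (1 : Matrix (Fin κ) (Fin κ) ℝ)).PosSemidef)
    (hQtpos : ∀ t ∈ Icc (0:ℝ) T, (Qt t).PosSemidef)
    (hQbtpos : ∀ t ∈ Icc (0:ℝ) T, (Qbt t).PosSemidef)
    (hQpos : Q.PosSemidef) (hQbpos : Qb.PosSemidef)
    -- smooth common-noise coefficients: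
    (N Γ : ℝ → Mat d)
    (hN : ContinuousOn N (Icc (0:ℝ) T)) (hΓ : ContinuousOn Γ (Icc (0:ℝ) T))
    -- positivity of the effective running and terminal costs:
    (hQS : ∀ t ∈ Icc (0:ℝ) T, (Qt t + Qbt t - Qbt t * St t).PosSemidef)
    (hQST : (Q + Qb - Qb * S).PosSemidef)
    -- the solution of `de/dt = (C+Γ)ᵀe`, `e₀ = Id`, assumed scalar:
    (e : ℝ → Mat d) (lam : ℝ → ℝ)
    (he : ∀ t ∈ Icc (0:ℝ) T,
      HasDerivWithinAt e ((C t + Γ t)ᵀ * e t) (Icc (0:ℝ) T) t)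
    (he0 : e 0 = 1)
    (hescalar : ∀ t ∈ Icc (0:ℝ) T, e t = lam t • (1 : Mat d) ∧ 0 < lam t)
    (x₀ : Vec d) :
    ∃ xb yb : ℝ → Vec d,
      (ContinuousOn xb (Icc (0:ℝ) T) ∧ ContinuousOn yb (Icc (0:ℝ) T) ∧
        (∀ t ∈ Icc (0:ℝ) T,
          xb t = x₀ + ∫ s in (0:ℝ)..t,
            ((N s + Γ s + A s + C s) *ᵥ xb s
              - B s *ᵥ ((R s)⁻¹ *ᵥ ((B s)ᵀ *ᵥ yb s)))) ∧
        (∀ t ∈ Icc (0:ℝ) T,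
          yb t = (Q + Qb - Qb * S) *ᵥ xb T
            + ∫ s in t..T,
                ((N s)ᵀ *ᵥ yb s + (Qt s + Qbt s - Qbt s * St s) *ᵥ xb s
                  + (A s)ᵀ *ᵥ yb s))) ∧
      ∀ xb₂ yb₂ : ℝ → Vec d,
        (ContinuousOn xb₂ (Icc (0:ℝ) T) ∧ ContinuousOn yb₂ (Icc (0:ℝ) T) ∧
          (∀ t ∈ Icc (0:ℝ) T,
            xb₂ t = x₀ + ∫ s in (0:ℝ)..t,
              ((N s + Γ s + A s + C s) *ᵥ xb₂ s
                - B s *ᵥ ((R s)⁻¹ *ᵥ ((B s)ᵀ *ᵥ yb₂ s)))) ∧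
          (∀ t ∈ Icc (0:ℝ) T,
            yb₂ t = (Q + Qb - Qb * S) *ᵥ xb₂ T
              + ∫ s in t..T,
                  ((N s)ᵀ *ᵥ yb₂ s + (Qt s + Qbt s - Qbt s * St s) *ᵥ xb₂ s
                    + (A s)ᵀ *ᵥ yb₂ s))) →
        ∀ t ∈ Icc (0:ℝ) T, xb₂ t = xb t ∧ yb₂ t = yb t := by
  have hscalar : ∀ t ∈ Icc 0 T, ∃ r : ℝ, C t + Γ t = r • 1 := fun t ht ↦
    exists_eq_smul_one_of_hasDerivWithinAt (uniqueDiffOn_Icc hT t ht) ht (he t ht)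
      (fun τ hτ ↦ (hescalar τ hτ).1) (hescalar t ht).2.ne'
  exact smooth_fb_system_existence_uniqueness_general hT hA hC hB hR hN hΓ (by fun_prop)
    (fun t ht ↦ posDef_of_sub_smul_one_posSemidef hlam0 (hRpos t ht)) hQS hQST hscalar x₀
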